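/- For smooth functions u : ℝ² → ℝ which are 2π-periodic in the second variable and compactly supported in the first variable, set D(u) = ∫_{ℝ×[0,2π]} ( ( −∂_s∂_s u + ∂_t∂_t u )² + 2 (∂_s u)² − 2 (∂_t u)² ). Then D is indefinite: there exist such functions u, v with D(u) > 0 and D(v) < 0. -/

import Mathlib

/-!
Integration by parts gives, for a product `u (s, t) = f s * g t`,
`D u = ‖f''‖² ‖g‖² - 2 ‖f'‖² ‖g'‖² + ‖f‖² ‖g''‖² + 2 ‖f'‖² ‖g‖² - 2 ‖f‖² ‖g'‖²`
in `L²` norms. For `g = cos` the norms of `g`, `g'`, `g''` all equal `√π`, the terms in `‖f'‖²`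
cancel, and `D u = π (‖f''‖² - ‖f‖²)`. Under the dilation `s ↦ f (c * s)` the two terms scale
like `c³` and `c⁻¹`, so every nonzero profile `f` gives both signs, for large and for small `c`
respectively.
-/

open MeasureTheory Real

/-- Partial derivative of `u : ℝ² → ℝ` in the first coordinate. -/
noncomputable def pdS (u : ℝ × ℝ → ℝ) (x : ℝ × ℝ) : ℝ := fderiv ℝ u x (1, 0)

/-- Partial derivative of `u : ℝ² → ℝ` in the second coordinate. -/
noncomputable def pdT (u : ℝ × ℝ → ℝ) (x : ℝ × ℝ) : ℝ := fderiv ℝ u x (0, 1)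

theorem exists_pos_pow_eq {n : ℕ} (hn : n ≠ 0) {r : ℝ} (hr : 0 < r) :
    ∃ c : ℝ, 0 < c ∧ c ^ n = r :=
  ⟨r ^ (n⁻¹ : ℝ), rpow_pos_of_pos hr _, rpow_inv_natCast_pow hr.le hn⟩

theorem periodic_deriv {𝕜 F : Type*} [NontriviallyNormedField 𝕜] [NormedAddCommGroup F]
    [NormedSpace 𝕜 F] {f : 𝕜 → F} {T : 𝕜} (h : Function.Periodic f T) :
    Function.Periodic (deriv f) T := fun x => by
  rw [← deriv_comp_add_const, h.funext]

theorem deriv_deriv_comp_mul_left {𝕜 F : Type*} [NontriviallyNormedField 𝕜]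
    [NormedAddCommGroup F] [NormedSpace 𝕜 F] (c : 𝕜) (f : 𝕜 → F) (x : 𝕜) :
    deriv (deriv fun y => f (c * y)) x = c ^ 2 • deriv (deriv f) (c * x) := by
  have h : (deriv fun y => f (c * y)) = fun y => c • deriv f (c * y) :=
    funext (deriv_comp_mul_left c f)
  rw [h, deriv_fun_const_smul_field, deriv_comp_mul_left, smul_smul, sq]

theorem deriv_ne_zero_of_hasCompactSupport {E : Type*} [NormedAddCommGroup E] [NormedSpace ℝ E]
    {f : ℝ → E} (hf : Differentiable ℝ f) (hc : HasCompactSupport f) (h0 : f ≠ 0) :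
    deriv f ≠ 0 := by
  intro h
  obtain ⟨a, ha⟩ := (Set.ne_univ_iff_exists_notMem _).1 hc.isCompact.ne_univ
  refine h0 (funext fun x => ?_)
  rw [is_const_of_deriv_eq_zero hf (congrFun h) x a, image_eq_zero_of_notMem_tsupport ha,
    Pi.zero_apply]

theorem hasCompactSupport_fun_pow {X M : Type*} [TopologicalSpace X] [MonoidWithZero M]
    {f : X → M} {n : ℕ} (hc : HasCompactSupport f) (hn : n ≠ 0) :
    HasCompactSupport fun x => f x ^ n :=
  hc.comp_left (g := (· ^ n)) (zero_pow hn)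

theorem integral_sq_pos_of_hasCompactSupport {X : Type*} [TopologicalSpace X] [MeasurableSpace X]
    [OpensMeasurableSpace X] {μ : Measure X} [IsFiniteMeasureOnCompacts μ] [μ.IsOpenPosMeasure]
    {f : X → ℝ} (hf : Continuous f) (hc : HasCompactSupport f) (h0 : f ≠ 0) :
    0 < ∫ x, f x ^ 2 ∂μ := by
  obtain ⟨a, ha⟩ := Function.ne_iff.1 h0
  exact (hf.pow 2).integral_pos_of_hasCompactSupport_nonneg_nonzero
    (hasCompactSupport_fun_pow hc two_ne_zero) (fun x => sq_nonneg (f x))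
    (pow_ne_zero 2 ha)

section IntegrationByParts

variable {f : ℝ → ℝ}

theorem integral_mul_deriv_deriv_of_hasCompactSupport (hf : ContDiff ℝ 2 f)
    (hc : HasCompactSupport f) :
    ∫ s, f s * deriv (deriv f) s = -∫ s, deriv f s ^ 2 := by
  have hf' : ContDiff ℝ 1 (deriv f) := hf.deriv'
  have hd : ∀ s, HasDerivAt f (deriv f s) s :=
    fun s => (hf.differentiable two_ne_zero s).hasDerivAt
  have hd' : ∀ s, HasDerivAt (deriv f) (deriv (deriv f) s) s :=
    fun s => (hf'.differentiable one_ne_zero s).hasDerivAt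
  simp only [sq]
  exact integral_mul_deriv_eq_deriv_mul_of_integrable (fun s _ => hd s) (fun s _ => hd' s)
    ((hf.continuous.mul hf'.continuous_deriv_one).integrable_of_hasCompactSupport hc.mul_right)
    ((hf'.continuous.mul hf'.continuous).integrable_of_hasCompactSupport hc.deriv.mul_right)
    ((hf.continuous.mul hf'.continuous).integrable_of_hasCompactSupport hc.mul_right)

theorem intervalIntegral_mul_deriv_deriv_of_periodic {T : ℝ} (hf : ContDiff ℝ 2 f)
    (hT : Function.Periodic f T) (a : ℝ) :
    ∫ t in a..a + T, f t * deriv (deriv f) t = -∫ t in a..a + T, deriv f t ^ 2 := by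
  have hf' : ContDiff ℝ 1 (deriv f) := hf.deriv'
  have parts := intervalIntegral.integral_mul_deriv_eq_deriv_mul
    (fun t _ => (hf.differentiable two_ne_zero t).hasDerivAt)
    (fun t _ => (hf'.differentiable one_ne_zero t).hasDerivAt)
    (hf'.continuous.intervalIntegrable a (a + T))
    (hf'.continuous_deriv_one.intervalIntegrable a (a + T))
  rw [parts, hT a, periodic_deriv hT a, sub_self, zero_sub]
  simp only [sq]

end IntegrationByParts

section Tensor

/-- The tensor product `f ⊗ g` of two real functions of one variable, a function on `ℝ²`. -/
def tensor (f g : ℝ → ℝ) (x : ℝ × ℝ) : ℝ := f x.1 * g x.2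

variable {f g : ℝ → ℝ}

theorem hasFDerivAt_tensor (hf : Differentiable ℝ f) (hg : Differentiable ℝ g) (x : ℝ × ℝ) :
    HasFDerivAt (tensor f g) (f x.1 • deriv g x.2 • ContinuousLinearMap.snd ℝ ℝ ℝ +
      g x.2 • deriv f x.1 • ContinuousLinearMap.fst ℝ ℝ ℝ) x :=
  ((hf x.1).hasDerivAt.comp_hasFDerivAt x hasFDerivAt_fst).mul
    ((hg x.2).hasDerivAt.comp_hasFDerivAt x hasFDerivAt_snd)

theorem pdS_tensor (hf : Differentiable ℝ f) (hg : Differentiable ℝ g) :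
    pdS (tensor f g) = tensor (deriv f) g := by
  funext x
  simp [pdS, (hasFDerivAt_tensor hf hg x).fderiv, tensor, mul_comm]

theorem pdT_tensor (hf : Differentiable ℝ f) (hg : Differentiable ℝ g) :
    pdT (tensor f g) = tensor f (deriv g) := by
  funext x
  simp [pdT, (hasFDerivAt_tensor hf hg x).fderiv, tensor]

theorem setIntegral_tensor_univ_prod (s : Set ℝ) :
    ∫ x in Set.univ ×ˢ s, tensor f g x = (∫ s, f s) * ∫ t in s, g t := by
  simp only [tensor]
  rw [Measure.volume_eq_prod, setIntegral_prod_mul, setIntegral_univ]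

theorem integrableOn_tensor_univ_prod {s : Set ℝ} (hf : Integrable f) (hg : IntegrableOn g s) :
    IntegrableOn (tensor f g) (Set.univ ×ˢ s) := by
  rw [IntegrableOn, Measure.volume_eq_prod, ← Measure.prod_restrict, Measure.restrict_univ]
  exact hf.mul_prod hg

end Tensor

/-- Smooth functions on `ℝ²` that are `2π`-periodic in the second variable and compactly supported
in the first: the functions on which the second variation is evaluated. -/
structure IsTestFunction (u : ℝ × ℝ → ℝ) : Prop where
  contDiff : ContDiff ℝ (⊤ : ℕ∞) u
  periodic : ∀ x : ℝ × ℝ, u (x.1, x.2 + 2 * π) = u x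
  exists_isCompact : ∃ K : Set ℝ, IsCompact K ∧ ∀ x : ℝ × ℝ, x.1 ∉ K → u x = 0

theorem isTestFunction_tensor {f g : ℝ → ℝ} (hf : ContDiff ℝ (⊤ : ℕ∞) f)
    (hc : HasCompactSupport f) (hg : ContDiff ℝ (⊤ : ℕ∞) g) (hT : Function.Periodic g (2 * π)) :
    IsTestFunction (tensor f g) where
  contDiff := (hf.comp contDiff_fst).mul (hg.comp contDiff_snd)
  periodic x := congrArg (f x.1 * ·) (hT x.2)
  exists_isCompact := ⟨tsupport f, hc.isCompact, fun x hx => by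
    rw [tensor, image_eq_zero_of_notMem_tsupport hx, zero_mul]⟩

theorem isTestFunction_tensor_dilation_cos {f : ℝ → ℝ} (hf : ContDiff ℝ (⊤ : ℕ∞) f)
    (hc : HasCompactSupport f) {c : ℝ} (c_ne : c ≠ 0) :
    IsTestFunction (tensor (fun s => f (c * s)) cos) :=
  isTestFunction_tensor (hf.comp (contDiff_const.mul contDiff_id))
    (hc.comp_homeomorph (Homeomorph.mulLeft₀ c c_ne)) contDiff_cos cos_periodic

/-- The second variation `D(u)` of the area of the tube congruence, the integral being over one
period `ℝ × [0, 2π]`. -/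
noncomputable def secondVariation (u : ℝ × ℝ → ℝ) : ℝ :=
  ∫ x in (Set.univ ×ˢ Set.Icc (0 : ℝ) (2 * π) : Set (ℝ × ℝ)),
    ((-(pdS (pdS u) x) + pdT (pdT u) x) ^ 2 + 2 * (pdS u x) ^ 2 - 2 * (pdT u x) ^ 2)

section SecondVariation

variable {f g : ℝ → ℝ}

theorem secondVariation_integrand_tensor (hf : ContDiff ℝ 2 f) (hg : ContDiff ℝ 2 g)
    (x : ℝ × ℝ) :
    (-(pdS (pdS (tensor f g)) x) + pdT (pdT (tensor f g)) x) ^ 2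
        + 2 * (pdS (tensor f g) x) ^ 2 - 2 * (pdT (tensor f g) x) ^ 2 =
      tensor (fun s => deriv (deriv f) s ^ 2) (fun t => g t ^ 2) x
        - 2 * tensor (fun s => f s * deriv (deriv f) s) (fun t => g t * deriv (deriv g) t) x
        + tensor (fun s => f s ^ 2) (fun t => deriv (deriv g) t ^ 2) x
        + 2 * tensor (fun s => deriv f s ^ 2) (fun t => g t ^ 2) x
        - 2 * tensor (fun s => f s ^ 2) (fun t => deriv g t ^ 2) x := by
  have hf₀ := hf.differentiable two_ne_zero
  have hg₀ := hg.differentiable two_ne_zero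
  have hf₁ : Differentiable ℝ (deriv f) := hf.differentiable_deriv_two
  have hg₁ : Differentiable ℝ (deriv g) := hg.differentiable_deriv_two
  rw [pdS_tensor hf₀ hg₀, pdS_tensor hf₁ hg₀, pdT_tensor hf₀ hg₀, pdT_tensor hf₀ hg₁]
  simp only [tensor]
  ring

theorem secondVariation_tensor (hf : ContDiff ℝ 2 f) (hc : HasCompactSupport f)
    (hg : ContDiff ℝ 2 g) (hT : Function.Periodic g (2 * π)) :
    secondVariation (tensor f g) =
      (∫ s, deriv (deriv f) s ^ 2) * (∫ t in (0 : ℝ)..2 * π, g t ^ 2)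
        - 2 * ((∫ s, deriv f s ^ 2) * ∫ t in (0 : ℝ)..2 * π, deriv g t ^ 2)
        + (∫ s, f s ^ 2) * (∫ t in (0 : ℝ)..2 * π, deriv (deriv g) t ^ 2)
        + 2 * ((∫ s, deriv f s ^ 2) * ∫ t in (0 : ℝ)..2 * π, g t ^ 2)
        - 2 * ((∫ s, f s ^ 2) * ∫ t in (0 : ℝ)..2 * π, deriv g t ^ 2) := by
  have hf₁ : Continuous (deriv f) := hf.continuous_deriv one_le_two
  have hf₂ : Continuous (deriv (deriv f)) := hf.deriv'.continuous_deriv_one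
  have hg₁ : Continuous (deriv g) := hg.continuous_deriv one_le_two
  have hg₂ : Continuous (deriv (deriv g)) := hg.deriv'.continuous_deriv_one
  have integrable_tensor {p r : ℝ → ℝ} (hp : Continuous p) (hpc : HasCompactSupport p)
      (hr : Continuous r) :
      IntegrableOn (fun x => tensor p r x) (Set.univ ×ˢ Set.Icc 0 (2 * π)) :=
    integrableOn_tensor_univ_prod (hp.integrable_of_hasCompactSupport hpc)
      hr.continuousOn.integrableOn_Icc
  have integrable_sq_tensor {p r : ℝ → ℝ} (hp : Continuous p) (hpc : HasCompactSupport p)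
      (hr : Continuous r) :
      IntegrableOn (fun x => tensor (fun s => p s ^ 2) (fun t => r t ^ 2) x)
        (Set.univ ×ˢ Set.Icc 0 (2 * π)) :=
    integrable_tensor (hp.pow 2) (hasCompactSupport_fun_pow hpc two_ne_zero) (hr.pow 2)
  have int_f₂g := integrable_sq_tensor hf₂ hc.deriv.deriv hg.continuous
  have int_cross := (integrable_tensor (hf.continuous.fun_mul hf₂) hc.mul_right
    (hg.continuous.fun_mul hg₂)).const_mul 2
  have int_fg₂ := integrable_sq_tensor hf.continuous hc hg₂
  have int_f₁g := (integrable_sq_tensor hf₁ hc.deriv hg.continuous).const_mul 2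
  have int_fg₁ := (integrable_sq_tensor hf.continuous hc hg₁).const_mul 2
  simp only [secondVariation, secondVariation_integrand_tensor hf hg]
  rw [integral_sub (((int_f₂g.sub' int_cross).fun_add int_fg₂).fun_add int_f₁g) int_fg₁,
    integral_add ((int_f₂g.sub' int_cross).fun_add int_fg₂) int_f₁g,
    integral_add (int_f₂g.sub' int_cross) int_fg₂, integral_sub int_f₂g int_cross]
  simp only [integral_const_mul, setIntegral_tensor_univ_prod, integral_Icc_eq_integral_Ioc,
    ← intervalIntegral.integral_of_le two_pi_pos.le]
  have parts := intervalIntegral_mul_deriv_deriv_of_periodic hg hT 0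
  rw [zero_add] at parts
  rw [integral_mul_deriv_deriv_of_hasCompactSupport hf hc, parts, neg_mul_neg]

theorem secondVariation_tensor_cos (hf : ContDiff ℝ 2 f) (hc : HasCompactSupport f) :
    secondVariation (tensor f cos) = π * ((∫ s, deriv (deriv f) s ^ 2) - ∫ s, f s ^ 2) := by
  have hcos : ∫ t in (0 : ℝ)..2 * π, cos t ^ 2 = π := by simp [integral_cos_sq]
  have hsin : ∫ t in (0 : ℝ)..2 * π, sin t ^ 2 = π := by simp [integral_sin_sq]
  rw [secondVariation_tensor hf hc contDiff_cos cos_periodic]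
  simp only [deriv_cos', deriv.fun_neg', Real.deriv_sin, neg_sq, hcos, hsin]
  ring

theorem secondVariation_tensor_dilation_cos (hf : ContDiff ℝ 2 f) (hc : HasCompactSupport f)
    {c : ℝ} (c_pos : 0 < c) :
    secondVariation (tensor (fun s => f (c * s)) cos) =
      π * c⁻¹ * (c ^ 4 * (∫ s, deriv (deriv f) s ^ 2) - ∫ s, f s ^ 2) := by
  have integral_dilation (h : ℝ → ℝ) : ∫ s, h (c * s) = c⁻¹ * ∫ s, h s := by
    rw [Measure.integral_comp_mul_left, abs_of_pos (inv_pos.2 c_pos), smul_eq_mul]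
  have hfc : ContDiff ℝ 2 fun s => f (c * s) := by fun_prop
  rw [secondVariation_tensor_cos hfc (hc.comp_homeomorph (Homeomorph.mulLeft₀ c c_pos.ne'))]
  simp only [deriv_deriv_comp_mul_left, smul_eq_mul, mul_pow, integral_const_mul,
    integral_dilation fun s => f s ^ 2, integral_dilation fun s => deriv (deriv f) s ^ 2]
  ring

theorem integral_sq_deriv_deriv_pos (hf : ContDiff ℝ 2 f) (hc : HasCompactSupport f)
    (h0 : f ≠ 0) : 0 < ∫ s, deriv (deriv f) s ^ 2 :=
  integral_sq_pos_of_hasCompactSupport hf.deriv'.continuous_deriv_one hc.deriv.deriv <|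
    deriv_ne_zero_of_hasCompactSupport hf.differentiable_deriv_two hc.deriv <|
      deriv_ne_zero_of_hasCompactSupport (hf.differentiable two_ne_zero) hc h0

theorem exists_secondVariation_dilation_cos_eq (hf : ContDiff ℝ 2 f) (hc : HasCompactSupport f)
    (h0 : f ≠ 0) {r : ℝ} (hr : 0 < r) :
    ∃ c : ℝ, 0 < c ∧ secondVariation (tensor (fun s => f (c * s)) cos) =
      π * c⁻¹ * ((r - 1) * ∫ s, f s ^ 2) := by
  have hA := integral_sq_deriv_deriv_pos hf hc h0
  have hB := integral_sq_pos_of_hasCompactSupport (μ := volume) hf.continuous hc h0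
  obtain ⟨c, c_pos, hpow⟩ := exists_pos_pow_eq four_ne_zero (mul_pos hr (div_pos hB hA))
  refine ⟨c, c_pos, ?_⟩
  rw [secondVariation_tensor_dilation_cos hf hc c_pos, hpow, mul_assoc r,
    div_mul_cancel₀ _ hA.ne', sub_one_mul]

theorem exists_secondVariation_dilation_cos_pos (hf : ContDiff ℝ 2 f) (hc : HasCompactSupport f)
    (h0 : f ≠ 0) : ∃ c : ℝ, 0 < c ∧ 0 < secondVariation (tensor (fun s => f (c * s)) cos) := by
  have hB := integral_sq_pos_of_hasCompactSupport (μ := volume) hf.continuous hc h0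
  obtain ⟨c, c_pos, hD⟩ := exists_secondVariation_dilation_cos_eq hf hc h0 two_pos
  exact ⟨c, c_pos, hD ▸ mul_pos (by positivity) (by linarith)⟩

theorem exists_secondVariation_dilation_cos_neg (hf : ContDiff ℝ 2 f) (hc : HasCompactSupport f)
    (h0 : f ≠ 0) : ∃ c : ℝ, 0 < c ∧ secondVariation (tensor (fun s => f (c * s)) cos) < 0 := by
  have hB := integral_sq_pos_of_hasCompactSupport (μ := volume) hf.continuous hc h0
  obtain ⟨c, c_pos, hD⟩ := exists_secondVariation_dilation_cos_eq hf hc h0 one_half_pos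
  exact ⟨c, c_pos, hD ▸ mul_neg_of_pos_of_neg (by positivity) (by linarith)⟩

end SecondVariation

theorem exists_contDiff_hasCompactSupport_ne_zero :
    ∃ f : ℝ → ℝ, ContDiff ℝ (⊤ : ℕ∞) f ∧ HasCompactSupport f ∧ f ≠ 0 := by
  let φ : ContDiffBump (0 : ℝ) := default
  have hφ : φ 0 = 1 := φ.one_of_mem_closedBall (Metric.mem_closedBall_self φ.rIn_pos.le)
  exact ⟨φ, φ.contDiff, φ.hasCompactSupport, fun h => one_ne_zero (hφ.symm.trans (congrFun h 0))⟩

/-- the functional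
`D(u) = ∫_{ℝ×[0,2π]} ((−∂ₛ∂ₛu + ∂ₜ∂ₜu)² + 2(∂ₛu)² − 2(∂ₜu)²)` is indefinite on smooth
functions that are `2π`-periodic in the second variable and compactly supported in the first
(H-instability w.r.t. `G` of the tube congruence over an unbounded geodesic of `dS³`). -/
theorem tube_congruence_deSitter_G_unstable :
    ∃ u v : ℝ × ℝ → ℝ, ContDiff ℝ (⊤ : ℕ∞) u ∧ ContDiff ℝ (⊤ : ℕ∞) v ∧
      (∀ x : ℝ × ℝ, u (x.1, x.2 + 2 * π) = u x) ∧
      (∀ x : ℝ × ℝ, v (x.1, x.2 + 2 * π) = v x) ∧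
      (∃ K : Set ℝ, IsCompact K ∧ ∀ x : ℝ × ℝ, x.1 ∉ K → u x = 0) ∧
      (∃ K : Set ℝ, IsCompact K ∧ ∀ x : ℝ × ℝ, x.1 ∉ K → v x = 0) ∧
      0 < (∫ x in (Set.univ ×ˢ Set.Icc (0 : ℝ) (2 * π) : Set (ℝ × ℝ)),
            ((-(pdS (pdS u) x) + pdT (pdT u) x) ^ 2 + 2 * (pdS u x) ^ 2 - 2 * (pdT u x) ^ 2)) ∧
      (∫ x in (Set.univ ×ˢ Set.Icc (0 : ℝ) (2 * π) : Set (ℝ × ℝ)),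
            ((-(pdS (pdS v) x) + pdT (pdT v) x) ^ 2 + 2 * (pdS v x) ^ 2 - 2 * (pdT v x) ^ 2)) < 0 := by
  obtain ⟨f, hf, hc, h0⟩ := exists_contDiff_hasCompactSupport_ne_zero
  have hf₂ : ContDiff ℝ 2 f := contDiff_infty.1 hf 2
  obtain ⟨a, a_pos, ha⟩ := exists_secondVariation_dilation_cos_pos hf₂ hc h0
  obtain ⟨b, b_pos, hb⟩ := exists_secondVariation_dilation_cos_neg hf₂ hc h0
  have hu := isTestFunction_tensor_dilation_cos hf hc a_pos.ne'
  have hv := isTestFunction_tensor_dilation_cos hf hc b_pos.ne'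
  exact ⟨_, _, hu.contDiff, hv.contDiff, hu.periodic, hv.periodic, hu.exists_isCompact,
    hv.exists_isCompact, ha, hb⟩
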